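/- Let (d,v,u) be an admissible triple for (λ,μ). Then udv^{−1} ∈ D_{I,J}, i.e. udv^{−1} is a distinguished double (W_I, W_J)-coset representative in W_r. -/

import Mathlib

/-!
Write `i·w = w⁻¹ i`. A root `e_q - e_p` (indices in `±{1, …, r}`, with `e_{-p} = -e_p`) is positive
exactly when `p < q`, so each membership `w ∈ D_K` with `K ⊆ Δ` says that `i·w < (i+1)·w` for the
`αᵢ ∈ K` (`isPos_rAct_sroot`). The subgroup `W_A` preserves the two blocks `{1, …, a}` and
`{a+1, …, r}`, hence it can only reverse the order of `p < q` when `p` and `q` lie in the same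
signed block (`lt_or_sameBlock`).

The central fact is `key`: this is the identity `Φ_A ∩ Φ_B·d = Φ_{A ∩ B·d}`. Both `d` and `d⁻¹` are
increasing on blocks, so if `i < i'` are in one `A`-block and their images under `d⁻¹` lie in one
signed `B`-block, then `d⁻¹` maps the interval `[i, i']` onto an interval by a translation, and every
simple root `α_t`, `i ≤ t < i'`, is in `A ∩ B·d`. Consequently `v⁻¹` is increasing on `[i, i']`.

For `α ∈ I` the root `α·u·d` is positive, and `v⁻¹` keeps it positive: either it lies outside `Φ_A`,
or it is a sum of elements of `A ∩ B·d`. For `α ∈ J` the root `α·v·d⁻¹` is positive. If it is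
outside `Φ_B`, then `u⁻¹` keeps it positive. Otherwise `α·v` is a sum of elements of `A ∩ B·d`, and
because `v⁻¹` sends these to positive roots whose sum is the simple root `α`, there is only one
summand; hence `α·v·d⁻¹ ∈ B ∩ J·v·d⁻¹`, and the condition on `u` applies.
-/


/- The hyperoctahedral group `W_r` (the Weyl group of type `B_r`), realized as the group
of permutations `w` of `{±1, …, ±r}` satisfying `(−i)w = −(iw)`.  We realize its elements
inside `Equiv.Perm ℤ`, letting `w` act on `i` on the *right* via `i·w := w⁻¹ i` (so that
`i·(wd) = (i·w)·d` and products of group elements can be written in the same order as in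
the paper). -/

namespace QQS

abbrev G : Type := Equiv.Perm ℤ

/-- The generators `s₀ = (1,−1)` and `sᵢ = (i,i+1)(−i,−i−1)`. -/
def s (i : ℕ) : G :=
  if i = 0 then Equiv.swap 1 (-1)
  else Equiv.swap (i : ℤ) ((i : ℤ) + 1) * Equiv.swap (-(i : ℤ)) (-((i : ℤ) + 1))

/-- The generating set `{s₀, s₁, …, s_{r−1}}` of `W_r`. -/
def gens (r : ℕ) : Set G := {x | ∃ i, i < r ∧ x = s i}

/-- Membership in `W_r`: permutations of `{±1, …, ±r}` commuting with negation. -/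
def inW (r : ℕ) (w : G) : Prop :=
  (∀ i : ℤ, w (-i) = -(w i)) ∧ ∀ i : ℤ, (r : ℤ) < |i| → w i = i

/-- The length `ℓ(w)` of `w ∈ W_r` with respect to the generators `s₀, …, s_{r−1}`. -/
noncomputable def len (r : ℕ) (w : G) : ℕ :=
  sInf {n | ∃ l : List G, l.length = n ∧ (∀ x ∈ l, x ∈ gens r) ∧ l.prod = w}

/-- The partial sum of the first `k` parts of a composition. -/
def psum (l : List ℕ) (k : ℕ) : ℕ := (l.take k).sum

end QQS
namespace QQS

/- The root system of type `B_r`.  `W_r` acts on the vector space `V` with basis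
`e₁, …, e_r`; we realize a vector `x = ∑ xᵢ eᵢ ∈ V` as the odd function `ℤ → ℚ` with
value `xᵢ` at `i` and `−xᵢ` at `−i`.  The (right) action of `w` on `V` determined by
`eᵢ·w = e_{i·w}` if `i·w > 0` and `eᵢ·w = −e_{−(i·w)}` if `i·w < 0` then becomes
`x·w = x ∘ w`. -/

/-- The basis vector `eᵢ`, as an odd function `ℤ → ℚ`. -/
def evec (i : ℕ) : ℤ → ℚ := fun j => if j = (i : ℤ) then 1 else if j = -(i : ℤ) then -1 else 0

/-- The simple roots: `α₀ = e₁` and `αᵢ = e_{i+1} − eᵢ` for `i ≥ 1`. -/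
def sroot : ℕ → (ℤ → ℚ)
  | 0 => evec 1
  | i + 1 => evec (i + 2) - evec (i + 1)

/-- `Δ₀ = {α₀, α₁, …, α_{r−1}}`. -/
def Delta0 (r : ℕ) : Set (ℤ → ℚ) := {x | ∃ i, i < r ∧ x = sroot i}

/-- `Δ = Δ₀ ∖ {α₀}`. -/
def DeltaS (r : ℕ) : Set (ℤ → ℚ) := Delta0 r \ {sroot 0}

/-- The right action of `w ∈ W_r` on `V`: `x·w = x ∘ w`. -/
def rAct (w : G) (x : ℤ → ℚ) : ℤ → ℚ := fun j => x (w j)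

/-- `x` is a positive root: `eᵢ`, `eᵢ + eⱼ` or `eⱼ − eᵢ` with `1 ≤ i < j ≤ r`. -/
def isPos (r : ℕ) (x : ℤ → ℚ) : Prop :=
  (∃ i, 1 ≤ i ∧ i ≤ r ∧ x = evec i) ∨
  (∃ i j, 1 ≤ i ∧ i < j ∧ j ≤ r ∧ (x = evec i + evec j ∨ x = evec j - evec i))

/-- `D_K = {d ∈ W_r : α·d is a positive root for every α ∈ K}`. -/
def DD (r : ℕ) (K : Set (ℤ → ℚ)) : Set G :=
  {d | inW r d ∧ ∀ α ∈ K, isPos r (rAct d α)}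

/-- `D_{K,L} = D_K ∩ D_L⁻¹`. -/
def DDd (r : ℕ) (K L : Set (ℤ → ℚ)) : Set G := {d | d ∈ DD r K ∧ d⁻¹ ∈ DD r L}

/-- For `M ⊆ Δ₀`, the parabolic subgroup `W_M`, generated by the reflections `s_α`
for `α ∈ M` (the reflection in the hyperplane orthogonal to `αᵢ` is `sᵢ`). -/
def Wpar (r : ℕ) (M : Set (ℤ → ℚ)) : Subgroup G :=
  Subgroup.closure {w | ∃ i, i < r ∧ sroot i ∈ M ∧ w = s i}

/-- `D^M_{K,L} = D_K ∩ D_L⁻¹ ∩ W_M`. -/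
def DDm (r : ℕ) (K L M : Set (ℤ → ℚ)) : Set G := {d | d ∈ DDd r K L ∧ d ∈ Wpar r M}

end QQS
namespace QQS

/- Fix an `a`-bicomposition `λ = (l1, l2)` and a `b`-bicomposition `μ = (m1, m2)` in
`Λ(n,r)`.  The sets of simple roots `J, I ⊆ Δ`, and `Ã, B̃, A, B ⊆ Δ₀`. -/

/-- `j` is a partial sum of the composition `l`. -/
def isPartialSum (l : List ℕ) (j : ℕ) : Prop := ∃ k, psum l k = j

/-- `{α_{off+j} : 1 ≤ j ≤ l.sum − 1, j not a partial sum of l}`. -/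
def compRoots (off : ℕ) (l : List ℕ) : Set (ℤ → ℚ) :=
  {x | ∃ j, 1 ≤ j ∧ j + 1 ≤ l.sum ∧ ¬ isPartialSum l j ∧ x = sroot (off + j)}

/-- `J = J₁ ∪ J₂ ⊆ Δ` associated to the bicomposition `(l1, l2)`. -/
def Jset (l1 l2 : List ℕ) : Set (ℤ → ℚ) := compRoots 0 l1 ∪ compRoots l1.sum l2

/-- `Ã = Δ₀ ∖ {α_a}` if `a ≠ r`, and `Ã = Δ₀` if `a = r`. -/
def Atil (r a : ℕ) : Set (ℤ → ℚ) := if a = r then Delta0 r else Delta0 r \ {sroot a}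

/-- `A = Ã ∖ {α₀}`. -/
def Aset (r a : ℕ) : Set (ℤ → ℚ) := Atil r a \ {sroot 0}

/-- An admissible triple `(d, v, u)` for `(λ, μ)`: `d ∈ D_{B̃,Ã}`,
`v ∈ D^A_{J, B·d ∩ A}` and `u ∈ D^B_{I, B ∩ J·v·d⁻¹}`. -/
def Admissible (r a b : ℕ) (l1 l2 m1 m2 : List ℕ) (d v u : G) : Prop :=
  d ∈ DDd r (Atil r b) (Atil r a) ∧
  v ∈ DDm r (Jset l1 l2) ((rAct d '' Aset r b) ∩ Aset r a) (Aset r a) ∧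
  u ∈ DDm r (Jset m1 m2) (Aset r b ∩ (rAct d⁻¹ '' (rAct v '' Jset l1 l2))) (Aset r b)

end QQS
namespace QQS

/-! ### Roots and positivity -/

/-- The vector `e_p` for a signed index `p ≠ 0`, with `e_{-p} = -e_p`. -/
def ev (p : ℤ) : ℤ → ℚ := fun j => if j = p then 1 else if j = -p then -1 else 0

lemma ev_neg {p : ℤ} (hp : p ≠ 0) : ev (-p) = -ev p := by
  funext j
  simp only [ev, Pi.neg_apply, neg_neg]
  split_ifs <;> first | omega | simp

lemma sroot_eq {i : ℕ} (hi : 1 ≤ i) : sroot i = ev ((i : ℤ) + 1) - ev i := by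
  obtain ⟨k, rfl⟩ : ∃ k, i = k + 1 := ⟨i - 1, by omega⟩
  have h : (((k + 1 : ℕ) : ℤ) + 1) = ((k + 2 : ℕ) : ℤ) := by push_cast; ring
  rw [h]
  rfl

lemma sroot_top (i : ℕ) : sroot i ((i : ℤ) + 1) = 1 := by
  cases i with
  | zero => simp [sroot, evec]
  | succ k =>
    rw [sroot_eq (by omega)]
    simp only [ev, Pi.sub_apply]
    split_ifs <;> first | omega | simp

lemma sroot_above {i : ℕ} {j : ℤ} (h : (i : ℤ) + 1 < j) : sroot i j = 0 := by
  cases i with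
  | zero =>
    simp only [sroot, evec]
    split_ifs <;> first | omega | simp
  | succ k =>
    rw [sroot_eq (by omega)]
    simp only [ev, Pi.sub_apply]
    split_ifs <;> first | omega | simp

lemma sroot_inj {i j : ℕ} (h : sroot i = sroot j) : i = j := by
  by_contra hne
  rcases Nat.lt_or_gt_of_ne hne with hl | hl
  · have h1 := sroot_top j
    rw [← h, sroot_above (by omega)] at h1
    exact zero_ne_one h1
  · have h1 := sroot_top i
    rw [h, sroot_above (by omega)] at h1
    exact zero_ne_one h1

/-- The coefficient of largest index in a positive root is positive. -/
lemma isPos_top {r : ℕ} {x : ℤ → ℚ} (h : isPos r x) :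
    ∃ j : ℤ, 0 < j ∧ 0 < x j ∧ ∀ k, j < k → x k = 0 := by
  rcases h with ⟨i, h1, h2, rfl⟩ | ⟨i, j, h1, h2, h3, rfl | rfl⟩
  · refine ⟨i, by omega, by simp [evec], fun k hk => ?_⟩
    simp only [evec]
    split_ifs <;> first | omega | simp
  · refine ⟨j, by omega, ?_, fun k hk => ?_⟩ <;>
    · simp only [evec, Pi.add_apply]
      split_ifs <;> first | omega | simp
  · refine ⟨j, by omega, ?_, fun k hk => ?_⟩ <;>
    · simp only [evec, Pi.sub_apply]
      split_ifs <;> first | omega | simp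

lemma isPos_ev_iff {r : ℕ} {p q : ℤ} (hp : p ≠ 0) (hq : q ≠ 0) (hpq : p ≠ q) (hpq' : p ≠ -q)
    (hpr : |p| ≤ r) (hqr : |q| ≤ r) : isPos r (ev q - ev p) ↔ p < q := by
  rw [abs_le] at hpr hqr
  constructor
  · intro h
    obtain ⟨j, hj, hx, hk⟩ := isPos_top h
    by_contra hlt
    -- The leading index `j` has a positive coefficient, so it is `q` or `-p`.
    have hj' : j = q ∨ j = -p := by
      by_contra hne
      simp only [ev, Pi.sub_apply] at hx
      split_ifs at hx <;> first | omega | (norm_num at hx)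
    rcases hj' with rfl | rfl
    · have := hk p (by omega)
      simp only [ev, Pi.sub_apply] at this
      split_ifs at this <;> first | omega | (norm_num at this)
    · have := hk (-q) (by omega)
      simp only [ev, Pi.sub_apply] at this
      split_ifs at this <;> first | omega | (norm_num at this)
  · intro h
    have hev : ∀ m : ℕ, evec m = ev (m : ℤ) := fun _ => rfl
    right
    rcases lt_or_gt_of_ne hp with hp0 | hp0
    · have e1 : ((-p).toNat : ℤ) = -p := by omega
      rcases lt_or_gt_of_ne hq with hq0 | hq0
      · have e2 : ((-q).toNat : ℤ) = -q := by omega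
        refine ⟨(-q).toNat, (-p).toNat, by omega, by omega, by omega, Or.inr ?_⟩
        rw [hev, hev, e1, e2, ev_neg hp, ev_neg hq]
        abel
      · have e2 : (q.toNat : ℤ) = q := by omega
        rcases lt_or_gt_of_ne (show -p ≠ q by omega) with hl | hl
        · refine ⟨(-p).toNat, q.toNat, by omega, by omega, by omega, Or.inl ?_⟩
          rw [hev, hev, e1, e2, ev_neg hp]
          abel
        · refine ⟨q.toNat, (-p).toNat, by omega, by omega, by omega, Or.inl ?_⟩
          rw [hev, hev, e1, e2, ev_neg hp]
          abel
    · have e1 : (p.toNat : ℤ) = p := by omega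
      have e2 : (q.toNat : ℤ) = q := by omega
      refine ⟨p.toNat, q.toNat, by omega, by omega, by omega, Or.inr ?_⟩
      rw [hev, hev, e1, e2]

/-! ### Signed permutations -/

lemma apply_inv_apply (w : G) (x : ℤ) : w (w⁻¹ x) = x := by simp

lemma inv_apply_apply (w : G) (x : ℤ) : w⁻¹ (w x) = x := by simp

lemma inW.inv {r : ℕ} {w : G} (h : inW r w) : inW r w⁻¹ := by
  refine ⟨fun i => ?_, fun i hi => ?_⟩
  · rw [Equiv.Perm.inv_eq_iff_eq, h.1]
    simp
  · rw [Equiv.Perm.inv_eq_iff_eq, h.2 i hi]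

lemma inW.mul {r : ℕ} {w w' : G} (h : inW r w) (h' : inW r w') : inW r (w * w') :=
  ⟨fun i => by simp [h.1, h'.1], fun i hi => by simp [h.2 i hi, h'.2 i hi]⟩

lemma inW.ne_zero {r : ℕ} {w : G} (h : inW r w) {x : ℤ} (hx : x ≠ 0) : w x ≠ 0 := by
  intro h0
  have h1 : w 0 = 0 := by
    have := h.1 0
    simp only [neg_zero] at this
    omega
  exact hx (w.injective (h0.trans h1.symm))

lemma inW.abs_le {r : ℕ} {w : G} (h : inW r w) {x : ℤ} (hx : |x| ≤ r) : |w x| ≤ r := by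
  by_contra hc
  push Not at hc
  have := w.injective (h.2 _ hc)
  rw [this] at hc
  omega

lemma rAct_ev {r : ℕ} {w : G} (h : inW r w) (p : ℤ) : rAct w (ev p) = ev (w⁻¹ p) := by
  funext j
  have h1 : w j = p ↔ j = w⁻¹ p := by rw [Equiv.Perm.eq_inv_iff_eq]
  have h2 : w j = -p ↔ j = -(w⁻¹ p) := by rw [← h.inv.1, Equiv.Perm.eq_inv_iff_eq]
  simp only [rAct, ev, h1, h2]

lemma rAct_sroot {r : ℕ} {w : G} (h : inW r w) {i : ℕ} (hi : 1 ≤ i) :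
    rAct w (sroot i) = ev (w⁻¹ ((i : ℤ) + 1)) - ev (w⁻¹ i) := by
  rw [sroot_eq hi, ← rAct_ev h, ← rAct_ev h]
  rfl

lemma isPos_rAct_sroot {r : ℕ} {w : G} (h : inW r w) {i : ℕ} (hi : 1 ≤ i) (hir : i < r) :
    isPos r (rAct w (sroot i)) ↔ w⁻¹ (i : ℤ) < w⁻¹ ((i : ℤ) + 1) := by
  rw [rAct_sroot h hi]
  apply isPos_ev_iff
  · exact h.inv.ne_zero (by omega)
  · exact h.inv.ne_zero (by omega)
  · intro he
    have := (w⁻¹ : G).injective he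
    omega
  · intro he
    rw [← h.inv.1] at he
    have := (w⁻¹ : G).injective he
    omega
  · exact h.inv.abs_le (by rw [_root_.abs_le]; omega)
  · exact h.inv.abs_le (by rw [_root_.abs_le]; omega)

/-! ### The subsets of simple roots -/

lemma mem_Atil {r a i : ℕ} (hir : i < r) (hia : i ≠ a) : sroot i ∈ Atil r a := by
  unfold Atil
  split_ifs
  · exact ⟨i, hir, rfl⟩
  · exact ⟨⟨i, hir, rfl⟩, fun h => hia (sroot_inj h)⟩

lemma mem_Aset {r a i : ℕ} (hi : 1 ≤ i) (hir : i < r) (hia : i ≠ a) : sroot i ∈ Aset r a :=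
  ⟨mem_Atil hir hia, fun h => by have := sroot_inj h; omega⟩

lemma of_mem_Aset {r a i : ℕ} (hir : i < r) (h : sroot i ∈ Aset r a) : 1 ≤ i ∧ i ≠ a := by
  obtain ⟨h1, h2⟩ := h
  refine ⟨?_, ?_⟩
  · by_contra hc
    obtain rfl : i = 0 := by omega
    exact h2 rfl
  · rintro rfl
    unfold Atil at h1
    rw [if_neg (by omega)] at h1
    exact h1.2 rfl

lemma of_mem_Jset {r a : ℕ} {l1 l2 : List ℕ} (hla : l1.sum = a) (hlr : l1.sum + l2.sum = r)
    {x : ℤ → ℚ} (hx : x ∈ Jset l1 l2) : ∃ j : ℕ, x = sroot j ∧ 1 ≤ j ∧ j < r ∧ j ≠ a := by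
  rcases hx with ⟨j, h1, h2, -, rfl⟩ | ⟨j, h1, h2, -, rfl⟩
  · exact ⟨0 + j, rfl, by omega, by omega, by omega⟩
  · exact ⟨l1.sum + j, rfl, by omega, by omega, by omega⟩

/-! ### Blocks -/

/-- `p` and `q` both lie in `{1, …, a}`, or both in `{a+1, …, r}`. -/
def PosBlock (r a : ℕ) (p q : ℤ) : Prop :=
  (1 ≤ p ∧ p ≤ a ∧ 1 ≤ q ∧ q ≤ a) ∨ ((a : ℤ) < p ∧ p ≤ r ∧ (a : ℤ) < q ∧ q ≤ r)

/-- `p` and `q` lie in a common block, or `-p` and `-q` do. -/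
def SameBlock (r a : ℕ) (p q : ℤ) : Prop := PosBlock r a p q ∨ PosBlock r a (-p) (-q)

/-- `w` preserves each of the blocks `{1, …, a}` and `{a+1, …, r}`. -/
def KeepsBlocks (r a : ℕ) (w : G) : Prop :=
  ∀ x : ℤ, ((1 ≤ w x ∧ w x ≤ a) ↔ (1 ≤ x ∧ x ≤ a)) ∧
    (((a : ℤ) < w x ∧ w x ≤ r) ↔ ((a : ℤ) < x ∧ x ≤ r))

lemma KeepsBlocks.inv {r a : ℕ} {w : G} (h : KeepsBlocks r a w) : KeepsBlocks r a w⁻¹ := by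
  intro x
  have := h (w⁻¹ x)
  simp only [apply_inv_apply] at this
  exact ⟨this.1.symm, this.2.symm⟩

lemma keepsBlocks_of_mem {r a : ℕ} {w : G} (h : w ∈ Wpar r (Aset r a)) :
    KeepsBlocks r a w := by
  unfold Wpar at h
  induction h using Subgroup.closure_induction with
  | mem x hx =>
    obtain ⟨i, hir, hi, rfl⟩ := hx
    obtain ⟨h1, h2⟩ := of_mem_Aset hir hi
    intro x
    simp only [s, if_neg (show i ≠ 0 by omega), Equiv.Perm.mul_apply, Equiv.swap_apply_def]
    split_ifs <;> omega
  | one => intro x; simp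
  | mul x y _ _ hx hy =>
    intro z
    exact ⟨(hx (y z)).1.trans (hy z).1, (hx (y z)).2.trans (hy z).2⟩
  | inv x _ hx => exact hx.inv

lemma KeepsBlocks.posBlock {r a : ℕ} {w : G} (h : KeepsBlocks r a w) {p q : ℤ}
    (hpq : PosBlock r a p q) : PosBlock r a (w p) (w q) := by
  have h1 := h p
  have h2 := h q
  unfold PosBlock at *
  omega

/-- A block-preserving element keeps the positivity of roots that do not join two indices of the
same signed block. -/
lemma lt_or_sameBlock {r a : ℕ} (har : a ≤ r) {w : G} (hw : inW r w) (h : KeepsBlocks r a w)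
    {p q : ℤ} (hp : p ≠ 0) (hq : q ≠ 0) (hpr : |p| ≤ r) (hqr : |q| ≤ r) (hpq : p < q) :
    w p < w q ∨ SameBlock r a p q := by
  have h1 := h p
  have h2 := h q
  have h3 := h (-p)
  have h4 := h (-q)
  rw [hw.1] at h3 h4
  rw [abs_le] at hpr hqr
  unfold SameBlock PosBlock
  omega

lemma lt_of_steps {f : ℤ → ℤ} {i j : ℤ} (hij : i < j)
    (h : ∀ t, i ≤ t → t < j → f t < f (t + 1)) : f i < f j := by
  have key : ∀ n, i + 1 ≤ n → n ≤ j → f i < f n := by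
    intro n hn
    induction n, hn using Int.leInduction with
    | base => intro _; exact h i le_rfl (by omega)
    | succ n hn ih => intro hj; exact (ih (by omega)).trans (h n (by omega) (by omega))
  exact key j (by omega) le_rfl

/-- `w ∈ D_Ã` acts increasingly on each block. -/
lemma DD_Atil_lt {r a : ℕ} (har : a ≤ r) {w : G} (hw : w ∈ DD r (Atil r a)) {p q : ℤ}
    (hb : PosBlock r a p q) (hpq : p < q) : w⁻¹ p < w⁻¹ q := by
  refine lt_of_steps hpq fun t h1 h2 => ?_
  unfold PosBlock at hb
  have et : ((t.toNat : ℕ) : ℤ) = t := by omega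
  have := (isPos_rAct_sroot hw.1 (i := t.toNat) (by omega) (by omega)).1
    (hw.2 _ (mem_Atil (by omega) (by omega)))
  rwa [et] at this

lemma DD_Atil_lt_same {r a : ℕ} (har : a ≤ r) {w : G} (hw : w ∈ DD r (Atil r a)) {p q : ℤ}
    (hb : SameBlock r a p q) (hpq : p < q) : w⁻¹ p < w⁻¹ q := by
  rcases hb with hb | hb
  · exact DD_Atil_lt har hw hb hpq
  · have hb' : PosBlock r a (-q) (-p) := by unfold PosBlock at *; omega
    have := DD_Atil_lt har hw hb' (by omega)
    rw [hw.1.inv.1, hw.1.inv.1] at this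
    omega

/-! ### The intersection of `Φ_A` with `Φ_B·d` -/

/-- A distinguished double coset representative translates an interval of an `A`-block whose end
points are sent to a single signed `B`-block. -/
lemma d_step {r a b : ℕ} (har : a ≤ r) (hbr : b ≤ r) {d : G}
    (hd : d ∈ DDd r (Atil r b) (Atil r a)) {i j : ℤ} (hij : PosBlock r a i j)
    (hd' : SameBlock r b (d i) (d j)) {t : ℤ} (hit : i ≤ t) (htj : t < j) :
    d (t + 1) = d t + 1 ∧ SameBlock r b (d t) (d t + 1) := by
  have mono : ∀ p q, i ≤ p → p < q → q ≤ j → d p < d q := by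
    intro p q h1 h2 h3
    have := DD_Atil_lt har hd.2 (p := p) (q := q) (by unfold PosBlock at *; omega) h2
    rwa [inv_inv] at this
  have hlt := mono t (t + 1) hit (by omega) (by omega)
  have hlo : d i ≤ d t := by
    rcases hit.lt_or_eq with h | h
    · exact (mono i t le_rfl h (by omega)).le
    · rw [h]
  have hhi : d (t + 1) ≤ d j := by
    rcases (show t + 1 ≤ j by omega).lt_or_eq with h | h
    · exact (mono (t + 1) j (by omega) h le_rfl).le
    · rw [h]
  have hblk : ∀ p q, d i ≤ p → p ≤ d j → d i ≤ q → q ≤ d j → SameBlock r b p q := by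
    intro p q _ _ _ _
    unfold SameBlock PosBlock at *
    omega
  refine ⟨?_, hblk _ _ (by omega) (by omega) (by omega) (by omega)⟩
  by_contra hne
  -- A gap after `d t` would be filled by the image of an integer strictly between `t` and `t + 1`.
  have h1 := DD_Atil_lt_same hbr hd.1
    (hblk (d t) (d t + 1) (by omega) (by omega) (by omega) (by omega)) (by omega)
  have h2 := DD_Atil_lt_same hbr hd.1
    (hblk (d t + 1) (d (t + 1)) (by omega) (by omega) (by omega) (by omega)) (by omega)
  rw [inv_apply_apply] at h1 h2
  omega

/-- Positive integers `t`, `t + 1` which `d⁻¹` sends to consecutive elements `m`, `m + 1` of a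
signed `B`-block give a simple root `α_t ∈ B·d`. The preimage `α_k ∈ B` has `k = m` for `m > 0`
and `k = -m - 1` for `m < 0`. -/
lemma exists_sroot {r b : ℕ} (hbr : b ≤ r) {d : G} (hd : inW r d) {t : ℕ} (ht : 1 ≤ t)
    (h : d ((t : ℤ) + 1) = d t + 1) (hs : SameBlock r b (d t) (d t + 1)) :
    ∃ k : ℕ, 1 ≤ k ∧ k < r ∧ k ≠ b ∧ rAct d (sroot k) = sroot t ∧
      ((k : ℤ) = d t ∨ (k : ℤ) = -d t - 1) := by
  have h1 : d⁻¹ (d t) = t := by simp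
  have h2 : d⁻¹ (d t + 1) = t + 1 := by rw [← h]; simp
  have hn := hd.inv.1
  generalize d (t : ℤ) = m at *
  rcases hs with hs | hs
  · unfold PosBlock at hs
    have e : (m.toNat : ℤ) = m := by omega
    refine ⟨m.toNat, by omega, by omega, by omega, ?_, Or.inl e⟩
    rw [rAct_sroot hd (by omega), e, h1, h2, sroot_eq ht]
  · unfold PosBlock at hs
    have e : ((-m - 1).toNat : ℤ) = -(m + 1) := by omega
    refine ⟨(-m - 1).toNat, by omega, by omega, by omega, ?_, Or.inr (by omega)⟩
    rw [rAct_sroot hd (by omega), e, show -(m + 1) + 1 = -m by ring, hn, hn, h1, h2,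
      ev_neg (by omega), ev_neg (by omega), sroot_eq ht]
    abel

/-- If `e_j - e_i` is a positive root in `Φ_A ∩ Φ_B·d`, then `α_t ∈ A ∩ B·d` for all `i ≤ t < j`,
so `v⁻¹` sends `α_t` to a positive root; that is, `t·v⁻¹ < (t+1)·v⁻¹`. -/
lemma key {r a b : ℕ} (har : a ≤ r) (hbr : b ≤ r) {d v : G}
    (hd : d ∈ DDd r (Atil r b) (Atil r a))
    (hv : v⁻¹ ∈ DD r ((rAct d '' Aset r b) ∩ Aset r a)) {i j : ℤ} (hij : PosBlock r a i j)
    (hd' : SameBlock r b (d i) (d j)) {t : ℤ} (hit : i ≤ t) (htj : t < j) :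
    v t < v (t + 1) := by
  obtain ⟨h1, h2⟩ := d_step har hbr hd hij hd' hit htj
  unfold PosBlock at hij
  lift t to ℕ using by omega
  obtain ⟨k, hk1, hk2, hk3, hk4, -⟩ := exists_sroot hbr hd.1.1 (by omega) h1 h2
  have := (isPos_rAct_sroot hv.1 (i := t) (by omega) (by omega)).1
    (hv.2 _ ⟨⟨_, mem_Aset hk1 hk2 hk3, hk4⟩, mem_Aset (by omega) (by omega) (by omega)⟩)
  rwa [inv_inv] at this

/-- Let `(d,v,u)` be an admissible triple for `(λ,μ)`.  Then `udv⁻¹ ∈ D_{I,J}`, i.e. `udv⁻¹` is a distinguished double `(W_I, W_J)`-coset representative in `W_r`. -/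
theorem udv_inv_mem_dist (n r a b : ℕ) (l1 l2 m1 m2 : List ℕ)
    (hla : l1.sum = a) (hlr : l1.sum + l2.sum = r) (hln : l1.length + l2.length = n)
    (hmb : m1.sum = b) (hmr : m1.sum + m2.sum = r) (hmn : m1.length + m2.length = n)
    (d v u : G) (hadm : Admissible r a b l1 l2 m1 m2 d v u) :
    u * d * v⁻¹ ∈ DDd r (Jset m1 m2) (Jset l1 l2) := by
  obtain ⟨hd, ⟨⟨hvJ, hvd⟩, hvW⟩, ⟨⟨huI, hud⟩, huW⟩⟩ := hadm
  have har : a ≤ r := by omega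
  have hbr : b ≤ r := by omega
  have kv := keepsBlocks_of_mem hvW
  have ku := keepsBlocks_of_mem huW
  have hdW := hd.1.1
  have hvW' := hvJ.1
  have huW' := huI.1
  have hw : inW r (u * d * v⁻¹) := (huW'.mul hdW).mul hvW'.inv
  refine ⟨⟨hw, fun α hα => ?_⟩, ⟨hw.inv, fun α hα => ?_⟩⟩
  · obtain ⟨j, rfl, hj1, hjr, hjb⟩ := of_mem_Jset hmb hmr hα
    rw [isPos_rAct_sroot hw hj1 hjr]
    have hlt := (isPos_rAct_sroot huW' hj1 hjr).1 (huI.2 _ hα)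
    have hblk : PosBlock r b (u⁻¹ (j : ℤ)) (u⁻¹ ((j : ℤ) + 1)) :=
      ku.inv.posBlock (by unfold PosBlock; omega)
    simp only [mul_inv_rev, inv_inv, Equiv.Perm.mul_apply]
    generalize u⁻¹ (j : ℤ) = k at *
    generalize u⁻¹ ((j : ℤ) + 1) = l at *
    have hkl := DD_Atil_lt hbr hd.1 hblk hlt
    have bk : k ≠ 0 ∧ l ≠ 0 ∧ |k| ≤ r ∧ |l| ≤ r := by
      unfold PosBlock at hblk
      simp only [abs_le]
      omega
    rcases lt_or_sameBlock har hvW' kv (hdW.inv.ne_zero bk.1) (hdW.inv.ne_zero bk.2.1)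
      (hdW.inv.abs_le bk.2.2.1) (hdW.inv.abs_le bk.2.2.2) hkl with h | h | h
    · exact h
    · exact lt_of_steps hkl fun t h1 h2 => key har hbr hd hvd h
        (by simpa [SameBlock] using Or.inl hblk) h1 h2
    · -- Both indices are negative: replace `e_q - e_p` by the equal root `e_{-p} - e_{-q}`.
      have h' : PosBlock r a (-(d⁻¹ l)) (-(d⁻¹ k)) := by unfold PosBlock at *; omega
      have hs : SameBlock r b (d (-(d⁻¹ l))) (d (-(d⁻¹ k))) := by
        simp only [hdW.1, apply_inv_apply]
        unfold SameBlock PosBlock at *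
        omega
      have := lt_of_steps (f := v) (show -(d⁻¹ l) < -(d⁻¹ k) by omega)
        fun t h1 h2 => key har hbr hd hvd h' hs h1 h2
      rw [hvW'.1, hvW'.1] at this
      omega
  · obtain ⟨j, rfl, hj1, hjr, hja⟩ := of_mem_Jset hla hlr hα
    rw [isPos_rAct_sroot hw.inv hj1 hjr]
    have hlt := (isPos_rAct_sroot hvW' hj1 hjr).1 (hvJ.2 _ hα)
    have hblk : PosBlock r a (v⁻¹ (j : ℤ)) (v⁻¹ ((j : ℤ) + 1)) :=
      kv.inv.posBlock (by unfold PosBlock; omega)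
    have hαv := rAct_sroot hvW' hj1
    have e1 : v (v⁻¹ (j : ℤ)) = j := by simp
    have e2 : v (v⁻¹ ((j : ℤ) + 1)) = j + 1 := by simp
    simp only [inv_inv, Equiv.Perm.mul_apply]
    generalize v⁻¹ (j : ℤ) = i at *
    generalize v⁻¹ ((j : ℤ) + 1) = i' at *
    have hii := DD_Atil_lt har hd.2 hblk hlt
    rw [inv_inv] at hii
    have bi : i ≠ 0 ∧ i' ≠ 0 ∧ |i| ≤ r ∧ |i'| ≤ r := by
      unfold PosBlock at hblk
      simp only [abs_le]
      omega
    rcases lt_or_sameBlock hbr huW' ku (hdW.ne_zero bi.1) (hdW.ne_zero bi.2.1)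
      (hdW.abs_le bi.2.2.1) (hdW.abs_le bi.2.2.2) hii with h | h
    · exact h
    · -- Since `v` increases from `j` to `j + 1` along `[i, i']`, this interval has length one.
      have hi' : i' = i + 1 := by
        by_contra hne
        have h1 := key har hbr hd hvd hblk h le_rfl hlt
        have h2 := lt_of_steps (f := v) (show i + 1 < i' by omega)
          fun t h1 h2 => key har hbr hd hvd hblk h (by omega) h2
        omega
      subst hi'
      obtain ⟨g1, g2⟩ := d_step har hbr hd hblk h le_rfl hlt
      unfold PosBlock at hblk
      lift i to ℕ using by omega
      obtain ⟨k, hk1, hk2, hk3, hk4, hk5⟩ := exists_sroot hbr hdW (by omega) g1 g2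
      have hαi : rAct v (sroot j) = sroot i := by rw [hαv, sroot_eq (by omega)]
      have hback : rAct d⁻¹ (sroot i) = sroot k := by
        rw [← hk4]
        funext x
        simp [rAct]
      have := (isPos_rAct_sroot hud.1 hk1 hk2).1
        (hud.2 _ ⟨mem_Aset hk1 hk2 hk3, ⟨_, ⟨_, hα, hαi⟩, hback⟩⟩)
      rw [inv_inv] at this
      rw [g1]
      rcases hk5 with hk5 | hk5
      · rwa [hk5] at this
      · rw [hk5, show -d (i : ℤ) - 1 = -(d i + 1) by ring,
          show -(d (i : ℤ) + 1) + 1 = -d i by ring, huW'.1, huW'.1] at this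
        omega

end QQS
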